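/- arXiv:2506.22145 — 3 statements merged into one kernel-verified Lean document; each statement's English description precedes it below -/
import Mathlib

section
/- Let T be a Cayley tree labelled with [n]_0. The following are equivalent: (1) T is an increasing tree, i.e., f_T(i) < i for every i ∈ {1,…,n}; (2) every vertex of {1,…,n} is a record of T (equivalently, every bonsai in the record decomposition of T consists of a single node); (3) the record code of T is a subexceedant function, i.e., blob(T)(i) ≤ i for every i ∈ {1,…,n−1}. -/
/-!
A vertex exceeding its parent is a record whenever the parent is the root or itself a record
(`isRecord_of_parent`), so strong induction on labels shows that every vertex of an increasing
tree is a record; the converse is the case of the first ancestor.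

If all vertices are records, the record following `i` is `i + 1`, so the code at `i` is
`f (i + 1) ≤ i`. Conversely, suppose the code is subexceedant and let `i` be the least
non-record. Since `n` is always a record (`isRecord_top`), `i ≤ n - 1` and the code at `i` is
`f i`. Thus `f i ≤ i`, strictly because a tree has no cycles (`iterate_ne_self`), and `f i` is
the root or, by minimality of `i`, a record; hence `i` is a record, a contradiction.
-/

open scoped Classical

namespace WearyParking

/-- `f` is the parent function of a Cayley tree on `{0,…,n}` rooted at `0`:
`f 0 = 0`, `f` is pinned to `0` outside `{1,…,n}`, `f` maps `{1,…,n}` into `{0,…,n}`,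
and every vertex reaches the root under iteration. -/
def IsCayleyTree (n : ℕ) (f : ℕ → ℕ) : Prop :=
  f 0 = 0 ∧ (∀ i, n < i → f i = 0) ∧
  (∀ i, 1 ≤ i → i ≤ n → f i ≤ n) ∧
  (∀ i, 1 ≤ i → i ≤ n → ∃ k, f^[k] i = 0)

/-- A non-root vertex `i` is a record of the tree if it is greater than
all of its ancestors. -/
def IsRecord (n : ℕ) (f : ℕ → ℕ) (i : ℕ) : Prop :=
  1 ≤ i ∧ i ≤ n ∧ ∀ k, 1 ≤ k → f^[k] i < i

/-- The smallest record larger than `i`. -/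
noncomputable def nextRecord (n : ℕ) (f : ℕ → ℕ) (i : ℕ) : ℕ :=
  sInf {j | IsRecord n f j ∧ i < j}

/-- The record (blob) code of the tree, a function on `{1,…,n-1}`:
at a non-record position it records the parent, and at a record position it
records the parent of the next record. -/
noncomputable def blob (n : ℕ) (f : ℕ → ℕ) (i : ℕ) : ℕ :=
  if IsRecord n f i then f (nextRecord n f i) else f i

/-- Number of children of vertex `v` in the tree. -/
def numChildren (n : ℕ) (f : ℕ → ℕ) (v : ℕ) : ℕ :=
  ((Finset.Icc 1 n).filter fun i => f i = v).card

/-- The list of the first `i+1` vertices visited by the priority-first search: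
start at the root `0`; at each step visit the smallest unvisited vertex whose
parent has been visited. -/
noncomputable def wearyList (n : ℕ) (f : ℕ → ℕ) : ℕ → List ℕ
  | 0 => [0]
  | (i + 1) =>
      wearyList n f i ++
        [sInf {v | 1 ≤ v ∧ v ≤ n ∧ v ∉ wearyList n f i ∧ f v ∈ wearyList n f i}]

/-- The weary permutation of the tree: `weary n f i` is the `i`-th vertex visited
by the priority-first search (with `weary n f 0 = 0`). -/
noncomputable def weary (n : ℕ) (f : ℕ → ℕ) (i : ℕ) : ℕ :=
  (wearyList n f n).getD i 0

/-- The inverse of the weary permutation. -/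
noncomputable def wearyInv (n : ℕ) (f : ℕ → ℕ) (v : ℕ) : ℕ :=
  sInf {i | weary n f i = v}

/-- The preference sequence `π_T` of the tree: `π_T i = ω_T⁻¹ (f_T i) + 1`. -/
noncomputable def pref (n : ℕ) (f : ℕ → ℕ) (i : ℕ) : ℕ :=
  wearyInv n f (f i) + 1

/-- Parent function of the priority tree `pt(T)`: `ω_T⁻¹ ∘ f_T ∘ ω_T`. -/
noncomputable def prioParent (n : ℕ) (f : ℕ → ℕ) (i : ℕ) : ℕ :=
  wearyInv n f (f (weary n f i))

/-- The list of spots occupied by cars `1,…,c` in the classical parking process: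
car `c` parks at the first spot `≥ π c` not occupied by an earlier car. -/
noncomputable def spotList (π : ℕ → ℕ) : ℕ → List ℕ
  | 0 => []
  | (c + 1) => spotList π c ++ [sInf {s | π (c + 1) ≤ s ∧ s ∉ spotList π c}]

/-- The spot where car `c` ends up in the classical parking process. -/
noncomputable def spot (π : ℕ → ℕ) (c : ℕ) : ℕ :=
  (spotList π c).getD (c - 1) 0

/-- `π` is a parking function of length `n`: preferences lie in `{1,…,n}`
(pinned to `1` outside `{1,…,n}`) and every car parks within the `n` spots. -/
def IsParkingFun (n : ℕ) (π : ℕ → ℕ) : Prop :=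
  (∀ c, 1 ≤ c → c ≤ n → 1 ≤ π c ∧ π c ≤ n) ∧
  (∀ c, c = 0 ∨ n < c → π c = 1) ∧
  (∀ c, 1 ≤ c → c ≤ n → spot π c ≤ n)

/-- The bird's-eye permutation `ω_π`: the car parked at spot `i` (and `0` at `0`). -/
noncomputable def birdsEye (n : ℕ) (π : ℕ → ℕ) (i : ℕ) : ℕ :=
  if i = 0 then 0 else sInf {c | 1 ≤ c ∧ c ≤ n ∧ spot π c = i}

/-- The inverse of the bird's-eye permutation. -/
noncomputable def birdsEyeInv (n : ℕ) (π : ℕ → ℕ) (c : ℕ) : ℕ :=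
  sInf {i | birdsEye n π i = c}

/-- Parent function of the parking tree `PT(π)`: `f_π i = ω_π (π i - 1)`. -/
noncomputable def ptParent (n : ℕ) (π : ℕ → ℕ) (i : ℕ) : ℕ :=
  if 1 ≤ i ∧ i ≤ n then birdsEye n π (π i - 1) else 0

/-- `v` is a record of the parking function `π`, i.e. a left-to-right maximum of
the word `ω_π(1) ω_π(2) ⋯ ω_π(n)`. -/
def IsPfRecord (n : ℕ) (π : ℕ → ℕ) (v : ℕ) : Prop :=
  ∃ i, 1 ≤ i ∧ i ≤ n ∧ birdsEye n π i = v ∧ ∀ j, 1 ≤ j → j < i → birdsEye n π j < v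

/-- The waiting time of the tree: `wait T = Σ_{i=1}^n (i - f_{pt(T)}(i))`. -/
noncomputable def wait (n : ℕ) (f : ℕ → ℕ) : ℕ :=
  ∑ i ∈ Finset.Icc 1 n, (i - prioParent n f i)

/-- The number of priority small ascents of the tree. -/
noncomputable def psa (n : ℕ) (f : ℕ → ℕ) : ℕ :=
  ((Finset.Icc 1 n).filter fun i => prioParent n f i = i - 1).card

/-- The number of children of the root. -/
def degRoot (n : ℕ) (f : ℕ → ℕ) : ℕ := numChildren n f 0

/-- The children sequence: `chseq n f j` is the number of vertices with exactly
`j` children. -/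
def chseq (n : ℕ) (f : ℕ → ℕ) (j : ℕ) : ℕ :=
  ((Finset.Icc 0 n).filter fun v => numChildren n f v = j).card

/-- The number of probes of the parking function: `n` plus the total displacement. -/
noncomputable def probes (n : ℕ) (π : ℕ → ℕ) : ℕ :=
  n + ∑ c ∈ Finset.Icc 1 n, (spot π c - π c)

/-- The number of lucky cars of `π`: cars parking at their preferred spot. -/
noncomputable def lucky (n : ℕ) (π : ℕ → ℕ) : ℕ :=
  ((Finset.Icc 1 n).filter fun c => spot π c = π c).card

/-- The number of `1`s in `π`. -/
def ones (n : ℕ) (π : ℕ → ℕ) : ℕ :=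
  ((Finset.Icc 1 n).filter fun c => π c = 1).card

/-- The multiplicity of the value `v` in the parking function `π`. -/
def multIn (n : ℕ) (π : ℕ → ℕ) (v : ℕ) : ℕ :=
  ((Finset.Icc 1 n).filter fun c => π c = v).card

/-- The multiplicity sequence: `multSeq n π j` is the number of values in
`{1,…,n+1}` appearing exactly `j` times in `π`. -/
def multSeq (n : ℕ) (π : ℕ → ℕ) (j : ℕ) : ℕ :=
  ((Finset.Icc 1 (n + 1)).filter fun v => multIn n π v = j).card

/-- The tree is a path graph with endpoints `0` and `n`: every vertex has at most
one child and `n` is the (unique) leaf. -/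
def IsPathTree (n : ℕ) (f : ℕ → ℕ) : Prop :=
  (∀ v, v ≤ n → numChildren n f v ≤ 1) ∧ numChildren n f n = 0

/-- `g` is the parent map of a rooted forest on `{1,…,n}` rooted at `{1,…,k}`:
the vertices `1,…,k` are roots (fixed points), every other vertex of `{1,…,n}` has a
parent in `{1,…,n}`, every vertex reaches one of the roots under iteration, and `g`
is pinned to `0` outside `{1,…,n}`. -/
def IsForestRootedAt (n k : ℕ) (g : ℕ → ℕ) : Prop :=
  (∀ i, 1 ≤ i → i ≤ k → g i = i) ∧
  (∀ i, k < i → i ≤ n → 1 ≤ g i ∧ g i ≤ n) ∧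
  (∀ i, 1 ≤ i → i ≤ n → ∃ m, 1 ≤ g^[m] i ∧ g^[m] i ≤ k) ∧
  (∀ i, i = 0 ∨ n < i → g i = 0)

/-- A Cayley tree has no cycles: a vertex is never its own ancestor. -/
lemma iterate_ne_self {n : ℕ} {f : ℕ → ℕ} (hf : IsCayleyTree n f) {i k : ℕ}
    (hi : 1 ≤ i) (hin : i ≤ n) (hk : 1 ≤ k) : f^[k] i ≠ i := by
  intro h
  obtain ⟨m, hm⟩ := hf.2.2.2 i hi hin
  have h1 : f^[k * m] i = i := by
    rw [Function.iterate_mul]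
    exact Function.iterate_fixed h m
  -- The root is fixed by `f`, so `i` stays at `0` from step `m ≤ k * m` on.
  have h2 : f^[k * m] i = 0 := by
    have hkm : m ≤ k * m := Nat.le_mul_of_pos_left m hk
    rw [← Nat.sub_add_cancel hkm, Function.iterate_add_apply, hm]
    exact Function.iterate_fixed hf.1 _
  omega

lemma iterate_le {n : ℕ} {f : ℕ → ℕ} (hf : IsCayleyTree n f) {i : ℕ} (hin : i ≤ n) (k : ℕ) :
    f^[k] i ≤ n := by
  induction k with
  | zero => exact hin
  | succ k ih =>
    rw [Function.iterate_succ_apply']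
    rcases Nat.eq_zero_or_pos (f^[k] i) with h | h
    · rw [h, hf.1]
      exact Nat.zero_le n
    · exact hf.2.2.1 _ h ih

lemma isRecord_top {n : ℕ} {f : ℕ → ℕ} (hf : IsCayleyTree n f) (hn : 1 ≤ n) :
    IsRecord n f n :=
  ⟨hn, le_rfl, fun k hk =>
    lt_of_le_of_ne (iterate_le hf le_rfl k) (iterate_ne_self hf hn le_rfl hk)⟩

/-- A vertex is a record as soon as it exceeds its parent and the parent is the root or a
record. -/
lemma isRecord_of_parent {n : ℕ} {f : ℕ → ℕ} (hf : IsCayleyTree n f) {i : ℕ}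
    (hi : 1 ≤ i) (hin : i ≤ n) (hlt : f i < i) (hp : f i = 0 ∨ IsRecord n f (f i)) :
    IsRecord n f i := by
  refine ⟨hi, hin, fun k hk => ?_⟩
  obtain ⟨k, rfl⟩ := Nat.exists_eq_add_of_le' hk
  rw [Function.iterate_succ_apply]
  rcases hp with h | h
  · rw [h, Function.iterate_fixed hf.1]
    exact hi
  · rcases Nat.eq_zero_or_pos k with rfl | hk0
    · exact hlt
    · exact (h.2.2 k hk0).trans hlt

lemma nextRecord_eq_succ {n : ℕ} {f : ℕ → ℕ} {i : ℕ} (h : IsRecord n f (i + 1)) :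
    nextRecord n f i = i + 1 := by
  have hmem : i + 1 ∈ {j | IsRecord n f j ∧ i < j} := ⟨h, Nat.lt_succ_self i⟩
  exact le_antisymm (Nat.sInf_le hmem) (Nat.sInf_mem ⟨_, hmem⟩).2

/-- For a Cayley tree the following are equivalent: it is increasing;
every vertex in `{1,…,n}` is a record; the record code is a subexceedant function. -/
theorem stmt2 (n : ℕ) (f : ℕ → ℕ) (hf : IsCayleyTree n f) :
    List.TFAE [
      ∀ i, 1 ≤ i → i ≤ n → f i < i,
      ∀ i, 1 ≤ i → i ≤ n → IsRecord n f i,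
      ∀ i, 1 ≤ i → i ≤ n - 1 → blob n f i ≤ i] := by
  tfae_have 1 → 2 := by
    intro h i
    induction i using Nat.strong_induction_on with
    | _ i ih =>
      intro hi hin
      have hlt := h i hi hin
      refine isRecord_of_parent hf hi hin hlt ?_
      rcases Nat.eq_zero_or_pos (f i) with h0 | h0
      · exact Or.inl h0
      · exact Or.inr (ih (f i) hlt h0 (hlt.le.trans hin))
  tfae_have 2 → 1 := fun h i hi hin => (h i hi hin).2.2 1 le_rfl
  tfae_have 2 → 3 := by
    intro h i hi hin
    have hs : IsRecord n f (i + 1) := h (i + 1) (by omega) (by omega)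
    have hlt : f (i + 1) < i + 1 := hs.2.2 1 le_rfl
    rw [blob, if_pos (h i hi (by omega)), nextRecord_eq_succ hs]
    omega
  tfae_have 3 → 2 := by
    intro h i
    induction i using Nat.strong_induction_on with
    | _ i ih =>
      intro hi hin
      by_contra hrec
      have hne : i ≠ n := by
        rintro rfl
        exact hrec (isRecord_top hf hi)
      have hle := h i hi (by omega)
      rw [blob, if_neg hrec] at hle
      have hlt : f i < i := lt_of_le_of_ne hle (iterate_ne_self hf hi hin (k := 1) le_rfl)
      refine hrec (isRecord_of_parent hf hi hin hlt ?_)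
      rcases Nat.eq_zero_or_pos (f i) with h0 | h0
      · exact Or.inl h0
      · exact Or.inr (ih (f i) hlt h0 (hlt.le.trans hin))
  tfae_finish

end WearyParking
end

section
/- For all integers n ≥ 2 and 1 ≤ k ≤ n, the identity k·n^{n−k−1} = Σ_{j=0}^{n−k} C(n−k, j)·(k+j−1)·(n−1)^{n−k−j−1} holds in the rational numbers (the exponents n−k−1 and n−k−j−1 may equal −1, interpreted as rational powers). -/
/-!
Put `m = n - k` and `x = n - 1 > 0`. Pulling out a factor `x⁻¹`, the right-hand side becomes
`x⁻¹ ((k - 1) ∑ C(m,j) x^(m-j) + ∑ j C(m,j) x^(m-j))`. The first sum is `n^m` by the binomial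
theorem and the second is `m n^(m-1)` (`sum_choose_mul_index`), so the total is
`x⁻¹ n^(m-1) ((k - 1) n + (n - k)) = k n^(m-1)`, because `(k - 1) n + (n - k) = k (n - 1)`.
-/

open scoped Classical

namespace WearyParking

/-- The derivative of the binomial theorem, `∑ j C(m,j) x^(m-j) = m (x+1)^(m-1)`, multiplied by
`x + 1` so that the exponent on the right stays natural when `m = 0`. -/
lemma sum_choose_mul_index (m : ℕ) (x : ℚ) :
    (x + 1) * ∑ j ∈ Finset.range (m + 1), (Nat.choose m j : ℚ) * (j : ℚ) * x ^ (m - j) =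
      m * (x + 1) ^ m := by
  cases m with
  | zero => simp
  | succ m =>
    have h : ∑ j ∈ Finset.range (m + 1 + 1),
        (Nat.choose (m + 1) j : ℚ) * (j : ℚ) * x ^ (m + 1 - j) = (m + 1) * (x + 1) ^ m := by
      rw [Finset.sum_range_succ', add_comm x 1, add_pow, Finset.mul_sum]
      simp only [Nat.cast_zero, mul_zero, zero_mul, add_zero, one_pow, one_mul]
      refine Finset.sum_congr rfl fun j _ => ?_
      -- absorption: `(m + 1) C(m, j) = C(m + 1, j + 1) (j + 1)`
      have hc : ((m : ℚ) + 1) * (Nat.choose m j : ℚ) =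
          (Nat.choose (m + 1) (j + 1) : ℚ) * ((j : ℚ) + 1) := by
        exact_mod_cast Nat.add_one_mul_choose_eq m j
      rw [Nat.add_sub_add_right]
      push_cast
      rw [← hc]
      ring
    rw [h]
    push_cast
    ring

/-- (Takács) For `n ≥ 2` and `1 ≤ k ≤ n`,
`k·n^{n-k-1} = Σ_{j=0}^{n-k} C(n-k,j)·(k+j-1)·(n-1)^{n-k-j-1}` in `ℚ`,
where the exponents are integers (possibly `-1`). -/
theorem stmt6 (n k : ℕ) (hn : 2 ≤ n) (hk1 : 1 ≤ k) (hkn : k ≤ n) :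
    (k : ℚ) * (n : ℚ) ^ ((n : ℤ) - (k : ℤ) - 1) =
      ∑ j ∈ Finset.range (n - k + 1),
        (Nat.choose (n - k) j : ℚ) * ((k : ℚ) + (j : ℚ) - 1) *
          ((n : ℚ) - 1) ^ ((n : ℤ) - (k : ℤ) - (j : ℤ) - 1) := by
  obtain ⟨m, rfl⟩ := Nat.exists_eq_add_of_le hkn
  have hm : k + m - k = m := by omega
  rw [hm]
  obtain ⟨x, hx⟩ : ∃ x : ℚ, x = ((k + m : ℕ) : ℚ) - 1 := ⟨_, rfl⟩
  have hN : ((k + m : ℕ) : ℚ) = x + 1 := by rw [hx]; ring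
  have hx0 : x ≠ 0 := by
    have : (2 : ℚ) ≤ ((k + m : ℕ) : ℚ) := by exact_mod_cast hn
    intro h
    linarith
  have hN0 : x + 1 ≠ 0 := by
    rw [← hN]
    exact_mod_cast (by omega : k + m ≠ 0)
  have hkm : (m : ℚ) = x + 1 - k := by
    rw [← hN]
    push_cast
    ring
  rw [← hx, hN]
  have hterm : ∀ j ∈ Finset.range (m + 1),
      (Nat.choose m j : ℚ) * ((k : ℚ) + (j : ℚ) - 1) *
          x ^ (((k + m : ℕ) : ℤ) - (k : ℤ) - (j : ℤ) - 1) =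
        x⁻¹ * (((k : ℚ) - 1) * (x ^ (m - j) * (Nat.choose m j : ℚ)) +
          (Nat.choose m j : ℚ) * (j : ℚ) * x ^ (m - j)) := by
    intro j hj
    have hj' : j ≤ m := Nat.lt_succ_iff.mp (Finset.mem_range.mp hj)
    have he : ((k + m : ℕ) : ℤ) - (k : ℤ) - (j : ℤ) - 1 = ((m - j : ℕ) : ℤ) - 1 := by
      push_cast [hj']
      ring
    rw [he, zpow_sub_one₀ hx0, zpow_natCast]
    ring
  rw [Finset.sum_congr rfl hterm, ← Finset.mul_sum, Finset.sum_add_distrib, ← Finset.mul_sum]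
  have hbin : ∑ j ∈ Finset.range (m + 1), x ^ (m - j) * (Nat.choose m j : ℚ) = (x + 1) ^ m := by
    rw [add_comm x 1, add_pow]
    simp
  have he : ((k + m : ℕ) : ℤ) - (k : ℤ) - 1 = (m : ℤ) - 1 := by
    push_cast
    ring
  rw [hbin, he, zpow_sub_one₀ hN0, zpow_natCast]
  have hd := sum_choose_mul_index m x
  generalize (∑ j ∈ Finset.range (m + 1), (Nat.choose m j : ℚ) * (j : ℚ) * x ^ (m - j)) = S at hd ⊢
  rw [hkm] at hd
  field_simp
  linear_combination -hd

end WearyParking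
end

section
/- Let π be a parking function of length n. Then the set of records of the parking tree PT(π) equals the set of left-to-right maxima of the word ω_π(1) ω_π(2) ⋯ ω_π(n); that is, Rec(PT(π)) = Rec(π). -/
/-!
Car `c` parks at the first free spot at or after `π c`, so the spots from `π c` up to just
before `spot π c` hold cars smaller than `c` (`exists_earlier_car`), while the parent of `c` in
the parking tree is the car at spot `π c - 1` (`ptParent_cases`).

Hence proper ancestors of a car are parked to its left (`ancestor_left`), and a left-to-right
maximum of `ω_π` exceeds all of its ancestors. Conversely, the ancestors of `v` cut the street
left of `v` into intervals: strictly between an ancestor and its child `u` (`u = v` included)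
there are only cars passed over by `u`, hence smaller than `u`. If `v` exceeds all its
ancestors, it therefore exceeds every car to its left (`left_lt`). Since `spot π` is injective
on the `n` cars, every one of the `n` spots is filled (`exists_car`), so `ω_π` is a genuine inverse of `spot π`
(`birdsEye_spot`) and the infimum defining it at a spot in `{1,…,n}` is not that of an empty set.
-/

open scoped Classical

namespace WearyParking

lemma length_spotList (π : ℕ → ℕ) (c : ℕ) : (spotList π c).length = c := by
  induction c with
  | zero => rfl
  | succ c ih => simp [spotList, ih]

lemma spot_succ (π : ℕ → ℕ) (c : ℕ) :
    spot π (c + 1) = sInf {s | π (c + 1) ≤ s ∧ s ∉ spotList π c} := by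
  simp [spot, spotList, length_spotList]

lemma mem_spotList (π : ℕ → ℕ) (c s : ℕ) :
    s ∈ spotList π c ↔ ∃ d, 1 ≤ d ∧ d ≤ c ∧ spot π d = s := by
  induction c with
  | zero =>
    simp only [spotList, List.not_mem_nil, false_iff]
    rintro ⟨d, h1, h2, -⟩
    omega
  | succ c ih =>
    rw [spotList, List.mem_append, ih, List.mem_singleton, ← spot_succ]
    constructor
    · rintro (⟨d, h1, h2, h3⟩ | h)
      · exact ⟨d, h1, by omega, h3⟩
      · exact ⟨c + 1, by omega, le_rfl, h.symm⟩
    · rintro ⟨d, h1, h2, h3⟩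
      rcases Nat.lt_or_ge c d with h | h
      · obtain rfl : d = c + 1 := by omega
        exact Or.inr h3.symm
      · exact Or.inl ⟨d, h1, h, h3⟩

/-- Only finitely many spots are taken when car `c + 1` arrives, so the infimum defining
its spot is attained: that spot is at least its preference and free. -/
lemma spot_succ_spec (π : ℕ → ℕ) (c : ℕ) :
    π (c + 1) ≤ spot π (c + 1) ∧ spot π (c + 1) ∉ spotList π c := by
  have hne : {s | π (c + 1) ≤ s ∧ s ∉ spotList π c}.Nonempty := by
    obtain ⟨s, hs⟩ := Infinite.exists_notMem_finset
      ((spotList π c).toFinset ∪ Finset.range (π (c + 1)))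
    simp only [Finset.mem_union, List.mem_toFinset, Finset.mem_range, not_or, not_lt] at hs
    exact ⟨s, hs.2, hs.1⟩
  rw [spot_succ]
  exact Nat.sInf_mem hne

lemma le_spot (π : ℕ → ℕ) {c : ℕ} (hc : 1 ≤ c) : π c ≤ spot π c := by
  obtain ⟨c, rfl⟩ := Nat.exists_eq_add_of_le' hc
  exact (spot_succ_spec π c).1

lemma spot_ne_of_lt (π : ℕ → ℕ) {c d : ℕ} (hd : 1 ≤ d) (hdc : d < c) : spot π d ≠ spot π c := by
  obtain ⟨c, rfl⟩ := Nat.exists_eq_add_of_le' (show 1 ≤ c by omega)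
  intro h
  exact (spot_succ_spec π c).2 ((mem_spotList π c _).2 ⟨d, hd, by omega, h⟩)

lemma spot_inj (π : ℕ → ℕ) {c d : ℕ} (hc : 1 ≤ c) (hd : 1 ≤ d) (h : spot π c = spot π d) :
    c = d := by
  rcases lt_trichotomy c d with hl | hl | hl
  · exact (spot_ne_of_lt π hc hl h).elim
  · exact hl
  · exact (spot_ne_of_lt π hd hl h.symm).elim

/-- Every spot that a car `c` passes over was taken by an earlier car. -/
lemma exists_earlier_car (π : ℕ → ℕ) {c j : ℕ} (hc : 1 ≤ c) (hj : π c ≤ j) (hjc : j < spot π c) :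
    ∃ d, 1 ≤ d ∧ d < c ∧ spot π d = j := by
  obtain ⟨c, rfl⟩ := Nat.exists_eq_add_of_le' hc
  rw [spot_succ] at hjc
  have h := Nat.notMem_of_lt_sInf hjc
  simp only [Set.mem_ofPred_eq, not_and, not_not] at h
  obtain ⟨d, h1, h2, h3⟩ := (mem_spotList π c j).1 (h hj)
  exact ⟨d, h1, by omega, h3⟩

lemma one_le_spot {n : ℕ} {π : ℕ → ℕ} (hπ : IsParkingFun n π) {c : ℕ} (hc : 1 ≤ c) (hcn : c ≤ n) :
    1 ≤ spot π c :=
  (hπ.1 c hc hcn).1.trans (le_spot π hc)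

/-- By pigeonhole, every one of the `n` spots ends up occupied. -/
lemma exists_car {n : ℕ} {π : ℕ → ℕ} (hπ : IsParkingFun n π) {i : ℕ} (hi : 1 ≤ i) (hin : i ≤ n) :
    ∃ c, 1 ≤ c ∧ c ≤ n ∧ spot π c = i := by
  have hmaps : ∀ c ∈ Finset.Icc 1 n, spot π c ∈ Finset.Icc 1 n := by
    intro c hc
    rw [Finset.mem_Icc] at hc ⊢
    exact ⟨one_le_spot hπ hc.1 hc.2, hπ.2.2 c hc.1 hc.2⟩
  have hinj : Set.InjOn (spot π) (Finset.Icc 1 n : Finset ℕ) := by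
    intro c hc d hd h
    rw [Finset.mem_coe, Finset.mem_Icc] at hc hd
    exact spot_inj π hc.1 hd.1 h
  obtain ⟨c, hc, h⟩ := Finset.surjOn_of_injOn_of_card_le (spot π) hmaps hinj le_rfl
    (Finset.mem_coe.2 (Finset.mem_Icc.2 ⟨hi, hin⟩))
  rw [Finset.mem_coe, Finset.mem_Icc] at hc
  exact ⟨c, hc.1, hc.2, h⟩

lemma birdsEye_spot {n : ℕ} {π : ℕ → ℕ} (hπ : IsParkingFun n π) {c : ℕ} (hc : 1 ≤ c)
    (hcn : c ≤ n) : birdsEye n π (spot π c) = c := by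
  have h1 := one_le_spot hπ hc hcn
  rw [birdsEye, if_neg (by omega)]
  have hmem : c ∈ {d | 1 ≤ d ∧ d ≤ n ∧ spot π d = spot π c} := ⟨hc, hcn, rfl⟩
  have h := Nat.sInf_mem ⟨c, hmem⟩
  exact spot_inj π h.1 hc h.2.2

/-- A non-root parent of `c` is parked immediately before the preferred spot of `c`. -/
lemma ptParent_cases {n : ℕ} {π : ℕ → ℕ} (hπ : IsParkingFun n π) {c : ℕ} (hc : 1 ≤ c)
    (hcn : c ≤ n) : (π c = 1 ∧ ptParent n π c = 0) ∨
      (1 ≤ ptParent n π c ∧ ptParent n π c ≤ n ∧ spot π (ptParent n π c) + 1 = π c) := by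
  obtain ⟨h1, h2⟩ := hπ.1 c hc hcn
  rw [ptParent, if_pos ⟨hc, hcn⟩]
  rcases Nat.eq_or_lt_of_le h1 with h | h
  · left
    simp [birdsEye, ← h]
  · right
    obtain ⟨d, hd1, hd2, hd3⟩ := exists_car hπ (show 1 ≤ π c - 1 by omega) (by omega)
    rw [← hd3, birdsEye_spot hπ hd1 hd2]
    exact ⟨hd1, hd2, by omega⟩

lemma iterate_ptParent_zero (n : ℕ) (π : ℕ → ℕ) (k : ℕ) : (ptParent n π)^[k] 0 = 0 :=
  Function.iterate_fixed (by simp [ptParent]) k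

/-- Proper ancestors of `c` other than the root are parked to the left of `c`. -/
lemma ancestor_left {n : ℕ} {π : ℕ → ℕ} (hπ : IsParkingFun n π) (k : ℕ) :
    ∀ c, 1 ≤ c → c ≤ n → (ptParent n π)^[k + 1] c = 0 ∨
      ∃ j, 1 ≤ j ∧ j < spot π c ∧ birdsEye n π j = (ptParent n π)^[k + 1] c := by
  induction k with
  | zero =>
    intro c hc hcn
    have hs := le_spot π hc
    rcases ptParent_cases hπ hc hcn with ⟨-, h⟩ | ⟨h1, h2, h3⟩
    · exact Or.inl h
    · exact Or.inr ⟨spot π (ptParent n π c), one_le_spot hπ h1 h2, by omega,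
        birdsEye_spot hπ h1 h2⟩
  | succ k ih =>
    intro c hc hcn
    have hs := le_spot π hc
    rw [Function.iterate_succ_apply]
    rcases ptParent_cases hπ hc hcn with ⟨-, h⟩ | ⟨h1, h2, h3⟩
    · left
      rw [h, iterate_ptParent_zero]
    · rcases ih _ h1 h2 with h | ⟨j, hj1, hj2, hj3⟩
      · exact Or.inl h
      · exact Or.inr ⟨j, hj1, by omega, hj3⟩

/-- If `c ≤ v` and all proper ancestors of `c` are below `v`, then so are all cars parked to
the left of `c`. The spots left of `c` are those `c` passed over (taken by cars below `c`),
the spot of its parent, and the spots left of its parent, which are covered by induction. -/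
lemma left_lt {n : ℕ} {π : ℕ → ℕ} (hπ : IsParkingFun n π) (v : ℕ) (p : ℕ) :
    ∀ c, spot π c = p → 1 ≤ c → c ≤ n → c ≤ v → (∀ k, 1 ≤ k → (ptParent n π)^[k] c < v) →
      ∀ j, 1 ≤ j → j < p → birdsEye n π j < v := by
  induction p using Nat.strong_induction_on with
  | _ p ih =>
    intro c hp hc hcn hcv hanc j hj1 hjp
    have hs := le_spot π hc
    rcases Nat.lt_or_ge j (π c) with hlt | hge
    · rcases ptParent_cases hπ hc hcn with ⟨h, -⟩ | ⟨h1, h2, h3⟩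
      · omega
      · have hpar : ptParent n π c < v := hanc 1 le_rfl
        rcases Nat.eq_or_lt_of_le (show j ≤ spot π (ptParent n π c) by omega) with h | h
        · rwa [h, birdsEye_spot hπ h1 h2]
        · refine ih _ (by omega) _ rfl h1 h2 hpar.le (fun k _ => ?_) j hj1 h
          rw [← Function.iterate_succ_apply]
          exact hanc (k + 1) (by omega)
    · obtain ⟨d, hd1, hd2, rfl⟩ := exists_earlier_car π hc hge (by omega)
      rw [birdsEye_spot hπ hd1 (by omega)]
      omega

/-- The records of the parking tree `PT(π)` are exactly the
left-to-right maxima of the word `ω_π(1) ⋯ ω_π(n)`. -/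
theorem stmt11 (n : ℕ) (π : ℕ → ℕ) (hπ : IsParkingFun n π) :
    ∀ v, IsRecord n (ptParent n π) v ↔ IsPfRecord n π v := by
  intro v
  constructor
  · rintro ⟨hv1, hvn, hanc⟩
    exact ⟨spot π v, one_le_spot hπ hv1 hvn, hπ.2.2 v hv1 hvn, birdsEye_spot hπ hv1 hvn,
      left_lt hπ v _ v rfl hv1 hvn le_rfl hanc⟩
  · rintro ⟨i, hi1, hin, hiv, hleft⟩
    obtain ⟨c, hc1, hcn, rfl⟩ := exists_car hπ hi1 hin
    obtain rfl : c = v := by rwa [birdsEye_spot hπ hc1 hcn] at hiv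
    refine ⟨hc1, hcn, fun k hk => ?_⟩
    obtain ⟨k, rfl⟩ := Nat.exists_eq_add_of_le' hk
    rcases ancestor_left hπ k c hc1 hcn with h | ⟨j, hj1, hj2, hj3⟩
    · omega
    · rw [← hj3]
      exact hleft j hj1 hj2

end WearyParking
end
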